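/- Let c₁, …, c₆ ∈ ℝ, let L(x,y,p,q) = c₁ + c₂x + c₃y + c₄p + c₅q + c₆(xp + yq), let U ⊆ ℝ⁴ be a nonempty open set on which L ≠ 0, and let D = L⁻² on U. Then the scalar curvature R of the reduced Lychagin–Rubtsov metric G_D (computed from the coordinate Christoffel symbols, Riemann tensor, Ricci tensor and trace with the inverse metric) is the constant ±24 (c₂c₄ + c₃c₅ − c₁c₆) on U; in particular, R vanishes identically on U if and only if c₂c₄ + c₃c₅ − c₁c₆ = 0. -/

import Mathlib

/-- Partial derivative of `f : ℝ⁴ → ℝ` in the `i`-th coordinate direction. -/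
noncomputable def pd (i : Fin 4) (f : (Fin 4 → ℝ) → ℝ) (u : Fin 4 → ℝ) : ℝ :=
  fderiv ℝ f u (Pi.single i 1)

/-- Christoffel symbols `Γᵏᵢⱼ` of a matrix-valued metric `g` in coordinates. -/
noncomputable def christoffel (g : (Fin 4 → ℝ) → Matrix (Fin 4) (Fin 4) ℝ)
    (k i j : Fin 4) (u : Fin 4 → ℝ) : ℝ :=
  (1 / 2) * ∑ l, (g u)⁻¹ k l *
    (pd i (fun v => g v j l) u + pd j (fun v => g v i l) u - pd l (fun v => g v i j) u)

/-- Curvature tensor `Rˡᵢⱼₖ` of a matrix-valued metric `g` in coordinates. -/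
noncomputable def riemann (g : (Fin 4 → ℝ) → Matrix (Fin 4) (Fin 4) ℝ)
    (l i j k : Fin 4) (u : Fin 4 → ℝ) : ℝ :=
  pd j (christoffel g l i k) u - pd k (christoffel g l i j) u +
    ∑ m, (christoffel g l j m u * christoffel g m i k u -
          christoffel g l k m u * christoffel g m i j u)

/-- Ricci tensor `Ricᵢₖ = Σₗ Rˡᵢₗₖ`. -/
noncomputable def ricci (g : (Fin 4 → ℝ) → Matrix (Fin 4) (Fin 4) ℝ)
    (i k : Fin 4) (u : Fin 4 → ℝ) : ℝ :=
  ∑ l, riemann g l i l k u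

/-- Scalar curvature `R = Σᵢₖ (g⁻¹)ⁱᵏ Ricᵢₖ`. -/
noncomputable def scalarCurv (g : (Fin 4 → ℝ) → Matrix (Fin 4) (Fin 4) ℝ)
    (u : Fin 4 → ℝ) : ℝ :=
  ∑ i, ∑ k, (g u)⁻¹ i k * ricci g i k u

/-- The reduced Lychagin–Rubtsov metric associated with `D : ℝ⁴ → ℝ`. -/
noncomputable def GD (D : (Fin 4 → ℝ) → ℝ) (u : Fin 4 → ℝ) :
    Matrix (Fin 4) (Fin 4) ℝ :=
  !![0, 0, D u, 0;
     0, 0, 0, D u;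
     D u, 0, 0, 0;
     0, D u, 0, 0]



/-- The gradient of `L`. -/
noncomputable def gradL (c₂ c₃ c₄ c₅ c₆ : ℝ) (i : Fin 4) (u : Fin 4 → ℝ) : ℝ :=
  (![c₂, c₃, c₄, c₅] : Fin 4 → ℝ) i + c₆ * u (i + 2)

theorem hasFDerivAt_coord (i : Fin 4) (u : Fin 4 → ℝ) :
    HasFDerivAt (fun v : Fin 4 → ℝ => v i)
      (ContinuousLinearMap.proj (R := ℝ) (φ := fun _ : Fin 4 => ℝ) i) u :=
  (ContinuousLinearMap.proj (R := ℝ) (φ := fun _ : Fin 4 => ℝ) i).hasFDerivAt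

theorem pd_congr (i : Fin 4) {f g : (Fin 4 → ℝ) → ℝ} {u : Fin 4 → ℝ} {U : Set (Fin 4 → ℝ)}
    (hU : IsOpen U) (hu : u ∈ U) (h : ∀ v ∈ U, f v = g v) : pd i f u = pd i g u := by
  unfold pd
  rw [Filter.EventuallyEq.fderiv_eq]
  filter_upwards [hU.mem_nhds hu] with v hv using h v hv

theorem pd_gradL (c₂ c₃ c₄ c₅ c₆ : ℝ) (m i : Fin 4) (u : Fin 4 → ℝ) :
    DifferentiableAt ℝ (gradL c₂ c₃ c₄ c₅ c₆ i) u ∧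
    pd m (gradL c₂ c₃ c₄ c₅ c₆ i) u = if m = i + 2 then c₆ else 0 := by
  have h : HasFDerivAt (gradL c₂ c₃ c₄ c₅ c₆ i) _ u :=
    ((hasFDerivAt_coord (i + 2) u).const_mul c₆).const_add
      ((![c₂, c₃, c₄, c₅] : Fin 4 → ℝ) i)
  refine ⟨h.differentiableAt, ?_⟩
  unfold pd
  rw [h.fderiv]
  simp [Pi.single_apply, eq_comm]

theorem pd_L (c₁ c₂ c₃ c₄ c₅ c₆ : ℝ) (L : (Fin 4 → ℝ) → ℝ)
    (hL : L = fun u => c₁ + c₂ * u 0 + c₃ * u 1 + c₄ * u 2 + c₅ * u 3 +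
      c₆ * (u 0 * u 2 + u 1 * u 3)) (m : Fin 4) (u : Fin 4 → ℝ) :
    DifferentiableAt ℝ L u ∧ pd m L u = gradL c₂ c₃ c₄ c₅ c₆ m u := by
  subst hL
  have h : HasFDerivAt (fun u : Fin 4 → ℝ => c₁ + c₂ * u 0 + c₃ * u 1 + c₄ * u 2 + c₅ * u 3 +
      c₆ * (u 0 * u 2 + u 1 * u 3)) _ u :=
    ((((((hasFDerivAt_coord 0 u).const_mul c₂).const_add c₁).add
      ((hasFDerivAt_coord 1 u).const_mul c₃)).add
      ((hasFDerivAt_coord 2 u).const_mul c₄)).add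
      ((hasFDerivAt_coord 3 u).const_mul c₅)).add
      ((((hasFDerivAt_coord 0 u).mul (hasFDerivAt_coord 2 u)).add
        ((hasFDerivAt_coord 1 u).mul (hasFDerivAt_coord 3 u))).const_mul c₆)
  refine ⟨h.differentiableAt, ?_⟩
  unfold pd
  rw [h.fderiv]
  fin_cases m <;> simp [gradL, Pi.single_apply]

theorem pd_inv_sq (m : Fin 4) (L : (Fin 4 → ℝ) → ℝ) (u : Fin 4 → ℝ)
    (hd : DifferentiableAt ℝ L u) (h0 : L u ≠ 0) :
    pd m (fun v => ((L v) ^ 2)⁻¹) u = -2 * pd m L u / (L u) ^ 3 := by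
  have h := (hasDerivAt_inv (pow_ne_zero 2 h0)).comp_hasFDerivAt u (hd.hasFDerivAt.pow 2)
  have h' : HasFDerivAt (fun v => ((L v) ^ 2)⁻¹) _ u := h
  unfold pd
  rw [h'.fderiv]
  simp
  field_simp

theorem pd_div (m : Fin 4) (f L : (Fin 4 → ℝ) → ℝ) (u : Fin 4 → ℝ)
    (hf : DifferentiableAt ℝ f u) (hd : DifferentiableAt ℝ L u) (h0 : L u ≠ 0) :
    DifferentiableAt ℝ (fun v => f v / L v) u ∧
    pd m (fun v => f v / L v) u = pd m f u / L u - f u * pd m L u / (L u) ^ 2 := by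
  have h := hf.hasFDerivAt.mul
    ((hasDerivAt_inv h0).comp_hasFDerivAt u hd.hasFDerivAt)
  have h' : HasFDerivAt (fun v => f v * (L v)⁻¹) _ u := h
  simp only [div_eq_mul_inv (f _)]
  refine ⟨h'.differentiableAt, ?_⟩
  unfold pd
  rw [h'.fderiv]
  simp
  field_simp
  ring

theorem GD_apply (D : (Fin 4 → ℝ) → ℝ) (u : Fin 4 → ℝ) (i j : Fin 4) :
    GD D u i j = if j = i + 2 then D u else 0 := by
  fin_cases i <;> fin_cases j <;> simp [GD]

theorem GD_inv_apply (D : (Fin 4 → ℝ) → ℝ) (u : Fin 4 → ℝ) (h : D u ≠ 0) (i j : Fin 4) :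
    (GD D u)⁻¹ i j = if j = i + 2 then (D u)⁻¹ else 0 := by
  have : (GD D u)⁻¹ = GD (fun v => (D v)⁻¹) u := by
    apply Matrix.inv_eq_right_inv
    ext a b
    fin_cases a <;> fin_cases b <;> simp [GD, Matrix.mul_apply, Fin.sum_univ_four, h]
  rw [this, GD_apply]

theorem pd_GD (D : (Fin 4 → ℝ) → ℝ) (u : Fin 4 → ℝ) (m i j : Fin 4) :
    pd m (fun v => GD D v i j) u = if j = i + 2 then pd m D u else 0 := by
  simp only [GD_apply]
  split_ifs
  · rfl
  · simp [pd]

/-- combination `δᵏⱼ aᵢ + δᵏᵢ aⱼ − ηᵢⱼ aᵏ`. -/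
def comb (k i j : Fin 4) (a : Fin 4 → ℝ) : ℝ :=
  (if k = j then a i else 0) + (if k = i then a j else 0) -
    (if j = i + 2 then a (k + 2) else 0)

theorem christoffel_eq (c₁ c₂ c₃ c₄ c₅ c₆ : ℝ) (L : (Fin 4 → ℝ) → ℝ)
    (hL : L = fun u => c₁ + c₂ * u 0 + c₃ * u 1 + c₄ * u 2 + c₅ * u 3 +
      c₆ * (u 0 * u 2 + u 1 * u 3))
    (U : Set (Fin 4 → ℝ)) (hU : IsOpen U)
    (hL0 : ∀ u ∈ U, L u ≠ 0)
    (D : (Fin 4 → ℝ) → ℝ) (hD : ∀ u ∈ U, D u = ((L u) ^ 2)⁻¹)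
    (k i j : Fin 4) (u : Fin 4 → ℝ) (hu : u ∈ U) :
    christoffel (GD D) k i j u =
      - comb k i j (fun m => gradL c₂ c₃ c₄ c₅ c₆ m u / L u) := by
  have h0 := hL0 u hu
  have hDu : D u ≠ 0 := by rw [hD u hu]; positivity
  have hpd : ∀ m, pd m D u = -2 * gradL c₂ c₃ c₄ c₅ c₆ m u / (L u) ^ 3 := fun m => by
    rw [pd_congr m hU hu hD, pd_inv_sq m L u (pd_L c₁ c₂ c₃ c₄ c₅ c₆ L hL m u).1 h0,
      (pd_L c₁ c₂ c₃ c₄ c₅ c₆ L hL m u).2]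
  unfold christoffel comb
  simp only [GD_inv_apply D u hDu, pd_GD, hpd, ite_mul, zero_mul, Finset.sum_ite_eq',
    Finset.sum_ite_eq, Finset.mem_univ, if_true, add_left_inj, hD u hu, inv_inv]
  split_ifs <;> field_simp <;> ring

theorem pd_christoffel (c₁ c₂ c₃ c₄ c₅ c₆ : ℝ) (L : (Fin 4 → ℝ) → ℝ)
    (hL : L = fun u => c₁ + c₂ * u 0 + c₃ * u 1 + c₄ * u 2 + c₅ * u 3 +
      c₆ * (u 0 * u 2 + u 1 * u 3))
    (U : Set (Fin 4 → ℝ)) (hU : IsOpen U)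
    (hL0 : ∀ u ∈ U, L u ≠ 0)
    (D : (Fin 4 → ℝ) → ℝ) (hD : ∀ u ∈ U, D u = ((L u) ^ 2)⁻¹)
    (n k i j : Fin 4) (u : Fin 4 → ℝ) (hu : u ∈ U) :
    pd n (christoffel (GD D) k i j) u =
      - comb k i j (fun m => (if n = m + 2 then c₆ else 0) / L u -
        gradL c₂ c₃ c₄ c₅ c₆ m u * gradL c₂ c₃ c₄ c₅ c₆ n u / (L u) ^ 2) := by
  have h0 := hL0 u hu
  rw [pd_congr n hU hu (christoffel_eq c₁ c₂ c₃ c₄ c₅ c₆ L hL U hU hL0 D hD k i j)]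
  have hq := fun m => pd_div n (gradL c₂ c₃ c₄ c₅ c₆ m) L u
    (pd_gradL c₂ c₃ c₄ c₅ c₆ n m u).1 (pd_L c₁ c₂ c₃ c₄ c₅ c₆ L hL n u).1 h0
  simp only [(pd_gradL c₂ c₃ c₄ c₅ c₆ n _ u).2, (pd_L c₁ c₂ c₃ c₄ c₅ c₆ L hL n u).2] at hq
  have hterm : ∀ (P : Prop) [Decidable P] (m : Fin 4),
      HasFDerivAt (fun v => if P then gradL c₂ c₃ c₄ c₅ c₆ m v / L v else 0)
        (if P then fderiv ℝ (fun v => gradL c₂ c₃ c₄ c₅ c₆ m v / L v) u else 0) u := by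
    intro P _ m
    split_ifs
    · exact (hq m).1.hasFDerivAt
    · exact hasFDerivAt_const _ _
  have h : HasFDerivAt
      (fun v => - comb k i j (fun m => gradL c₂ c₃ c₄ c₅ c₆ m v / L v)) _ u :=
    (((hterm (k = j) i).add (hterm (k = i) j)).sub (hterm (j = i + 2) (k + 2))).neg
  simp only [pd] at hq ⊢
  rw [h.fderiv]
  unfold comb
  simp only [← (hq _).2]
  split_ifs <;> simp

theorem scalarCurv_eq (c₁ c₂ c₃ c₄ c₅ c₆ : ℝ) (L : (Fin 4 → ℝ) → ℝ)
    (hL : L = fun u => c₁ + c₂ * u 0 + c₃ * u 1 + c₄ * u 2 + c₅ * u 3 +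
      c₆ * (u 0 * u 2 + u 1 * u 3))
    (U : Set (Fin 4 → ℝ)) (hU : IsOpen U)
    (hL0 : ∀ u ∈ U, L u ≠ 0)
    (D : (Fin 4 → ℝ) → ℝ) (hD : ∀ u ∈ U, D u = ((L u) ^ 2)⁻¹)
    (u : Fin 4 → ℝ) (hu : u ∈ U) :
    scalarCurv (GD D) u = -24 * (c₂ * c₄ + c₃ * c₅ - c₁ * c₆) := by
  have h0 := hL0 u hu
  have hDu : D u ≠ 0 := by rw [hD u hu]; positivity
  have hLu : L u = c₁ + c₂ * u 0 + c₃ * u 1 + c₄ * u 2 + c₅ * u 3 +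
      c₆ * (u 0 * u 2 + u 1 * u 3) := by rw [hL]
  have key : scalarCurv (GD D) u = -24 *
      (gradL c₂ c₃ c₄ c₅ c₆ 0 u * gradL c₂ c₃ c₄ c₅ c₆ 2 u +
        gradL c₂ c₃ c₄ c₅ c₆ 1 u * gradL c₂ c₃ c₄ c₅ c₆ 3 u - c₆ * L u) := by
    unfold scalarCurv ricci riemann
    simp only [GD_inv_apply D u hDu, ite_mul, zero_mul, Finset.sum_ite_eq',
      Finset.sum_ite_eq, Finset.mem_univ, if_true, hD u hu, inv_inv,
      christoffel_eq c₁ c₂ c₃ c₄ c₅ c₆ L hL U hU hL0 D hD _ _ _ u hu,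
      pd_christoffel c₁ c₂ c₃ c₄ c₅ c₆ L hL U hU hL0 D hD _ _ _ _ u hu]
    generalize L u = l at h0
    have e0 : (0 : Fin 4) + 2 = 2 := rfl
    have e1 : (1 : Fin 4) + 2 = 3 := rfl
    have e2 : (2 : Fin 4) + 2 = 0 := rfl
    have e3 : (3 : Fin 4) + 2 = 1 := rfl
    simp only [Fin.sum_univ_four, e0, e1, e2, e3, comb]
    simp [e0, e1, e2, e3]
    field_simp
    ring
  rw [key, hLu]
  simp [gradL]
  ring

/-- For `D = L⁻²` with `L(x,y,p,q) = c₁ + c₂x + c₃y + c₄p + c₅q + c₆(xp + yq)` nowhere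
zero on a nonempty open set `U`, the scalar curvature of the reduced Lychagin–Rubtsov
metric `G_D` is the constant `±24 (c₂c₄ + c₃c₅ − c₁c₆)` on `U`; in particular it
vanishes identically on `U` iff `c₂c₄ + c₃c₅ − c₁c₆ = 0`.
Coordinates: `x = u 0`, `y = u 1`, `p = u 2`, `q = u 3`. -/
theorem scalar_curvature_constant (c₁ c₂ c₃ c₄ c₅ c₆ : ℝ)
    (L : (Fin 4 → ℝ) → ℝ)
    (hL : L = fun u => c₁ + c₂ * u 0 + c₃ * u 1 + c₄ * u 2 + c₅ * u 3 +
      c₆ * (u 0 * u 2 + u 1 * u 3))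
    (U : Set (Fin 4 → ℝ)) (hU : IsOpen U) (hUne : U.Nonempty)
    (hL0 : ∀ u ∈ U, L u ≠ 0)
    (D : (Fin 4 → ℝ) → ℝ) (hD : ∀ u ∈ U, D u = ((L u) ^ 2)⁻¹) :
    ((∀ u ∈ U, scalarCurv (GD D) u = -24 * (c₂ * c₄ + c₃ * c₅ - c₁ * c₆)) ∨
      (∀ u ∈ U, scalarCurv (GD D) u = 24 * (c₂ * c₄ + c₃ * c₅ - c₁ * c₆))) ∧
    ((∀ u ∈ U, scalarCurv (GD D) u = 0) ↔ c₂ * c₄ + c₃ * c₅ - c₁ * c₆ = 0) := by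
  have key := scalarCurv_eq c₁ c₂ c₃ c₄ c₅ c₆ L hL U hU hL0 D hD
  refine ⟨Or.inl key, ?_, ?_⟩
  · intro h
    obtain ⟨u, hu⟩ := hUne
    have h1 := key u hu
    rw [h u hu] at h1
    linarith
  · intro h u hu
    rw [key u hu, h, mul_zero]
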